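/- Let D and d_e be natural numbers with d_e < D, set m = D − d_e, let n ≥ 1 be a natural number, let Δ > 0 be real, and let p ∈ [−1,1]^D. Define I(p,Δ) = (1/(2^{n/2−1} Γ(n/2))) ∫₀^∞ ( ∏_{i=d_e+1}^{D} (1/√(2π)) ∫_{s(−1−p_i)/Δ}^{s(1−p_i)/Δ} e^{−x²/2} dx ) s^{n−1} e^{−s²/2} ds and J_{m,n}(Δ) = (1/(2^{n/2−1} Γ(n/2))) ∫₀^∞ ( √(2/π) ∫₀^{s/Δ} e^{−x²/2} dx )^m s^{n−1} e^{−s²/2} ds. Then I(p,Δ) ≥ (1/2^m) · J_{m,n}(Δ/2). -/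

import Mathlib

/-!
The inequality holds factor by factor, for each fixed `s > 0`. Since `|p_i| ≤ 1`, the interval
`[s(-1 - p_i)/Δ, s(1 - p_i)/Δ]` contains `0` and has length `2s/Δ`. The Gaussian is even and
decreasing on `[0, ∞)`, so its mass on that interval is at least its mass on `[0, 2s/Δ]`
(`gauss_interval_le`). As `1/√(2π) = (1/2)√(2/π)`, each factor of `I(p, Δ)` is at least half the
corresponding factor of `J_{m,n}(Δ/2)`. Multiplying over the `m` coordinates and integrating against
the nonnegative weight gives the claim; the comparison of Bochner integrals only needs
integrability of the larger integrand (`integrableOn_prod_gauss`).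
-/

open MeasureTheory

/-- The integral `J_{m,n}(Δ)` from the paper. -/
noncomputable def Jmn (m n : ℕ) (Δ : ℝ) : ℝ :=
  (1 / (2 ^ ((n : ℝ) / 2 - 1) * Real.Gamma ((n : ℝ) / 2))) *
    ∫ s in Set.Ioi (0 : ℝ),
      (Real.sqrt (2 / Real.pi) * ∫ x in Set.Ioo 0 (s / Δ), Real.exp (-x ^ 2 / 2)) ^ m *
        (s ^ (n - 1) * Real.exp (-s ^ 2 / 2))

open Set in
/-- The weight `s ^ (n - 1) * exp (-s ^ 2 / 2)` of both outer integrals. -/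
lemma integrableOn_weight (n : ℕ) :
    IntegrableOn (fun s : ℝ => s ^ (n - 1) * Real.exp (-s ^ 2 / 2)) (Ioi 0) := by
  have h := integrableOn_rpow_mul_exp_neg_mul_sq (b := 1 / 2) (by norm_num)
    (s := ((n - 1 : ℕ) : ℝ)) (by linarith [Nat.cast_nonneg (α := ℝ) (n - 1)])
  refine h.congr_fun (fun s _ => ?_) measurableSet_Ioi
  simp only [Real.rpow_natCast]
  congr 2
  ring

lemma integrable_gauss : Integrable (fun x : ℝ => Real.exp (-x ^ 2 / 2)) := by
  refine (integrable_exp_neg_mul_sq (b := 1 / 2) (by norm_num)).congr ?_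
  refine Filter.Eventually.of_forall fun x => ?_
  simp only
  congr 1
  ring

lemma setIntegral_Ioo_eq_interval {f : ℝ → ℝ} {u v : ℝ} (h : u ≤ v) :
    ∫ x in Set.Ioo u v, f x = ∫ x in u..v, f x := by
  rw [intervalIntegral.integral_of_le h, integral_Ioc_eq_integral_Ioo]

/-- Among the intervals of length `a + b` containing `0`, the one starting at `0` has the least
Gaussian mass: reflecting `[-a, 0]` to `[0, a]`, it suffices to compare `[0, a]` with its
translate `[b, a + b]`, on which the Gaussian is smaller. -/
lemma gauss_interval_le {a b : ℝ} (ha : 0 ≤ a) (hb : 0 ≤ b) :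
    ∫ x in (0 : ℝ)..(a + b), Real.exp (-x ^ 2 / 2) ≤
      ∫ x in (-a)..b, Real.exp (-x ^ 2 / 2) := by
  have hi : ∀ u v : ℝ, IntervalIntegrable (fun x : ℝ => Real.exp (-x ^ 2 / 2)) volume u v :=
    fun u v => integrable_gauss.intervalIntegrable
  rw [← intervalIntegral.integral_add_adjacent_intervals (hi 0 b) (hi b (a + b)),
    ← intervalIntegral.integral_add_adjacent_intervals (hi (-a) 0) (hi 0 b)]
  have h1 : ∫ x in (-a)..0, Real.exp (-x ^ 2 / 2) = ∫ x in (0 : ℝ)..a, Real.exp (-x ^ 2 / 2) := by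
    have := intervalIntegral.integral_comp_neg (a := 0) (b := a)
      (fun x : ℝ => Real.exp (-x ^ 2 / 2))
    simpa using this.symm
  have h2 : ∫ x in b..(a + b), Real.exp (-x ^ 2 / 2) =
      ∫ x in (0 : ℝ)..a, Real.exp (-(x + b) ^ 2 / 2) := by
    have := intervalIntegral.integral_comp_add_right (a := 0) (b := a)
      (fun x : ℝ => Real.exp (-x ^ 2 / 2)) b
    simpa using this.symm
  have h3 : ∫ x in (0 : ℝ)..a, Real.exp (-(x + b) ^ 2 / 2) ≤
      ∫ x in (0 : ℝ)..a, Real.exp (-x ^ 2 / 2) := by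
    refine intervalIntegral.integral_mono_on ha
      (Continuous.intervalIntegrable (by fun_prop) _ _) (hi 0 a) fun x hx => ?_
    have := hx.1
    apply Real.exp_le_exp.2
    nlinarith [mul_nonneg this hb, sq_nonneg b]
  linarith

/-- Dominating the integrand of `I(p, Δ)`: every factor of the product is continuous in `s` and
bounded by the total Gaussian mass times its constant. -/
lemma integrableOn_prod_gauss {k : ℕ} (c : ℝ) (α β : Fin k → ℝ) (h : ∀ i, α i ≤ β i) (n : ℕ) :
    IntegrableOn (fun s : ℝ =>
      (∏ i, c * ∫ x in Set.Ioo (s * α i) (s * β i), Real.exp (-x ^ 2 / 2)) *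
        (s ^ (n - 1) * Real.exp (-s ^ 2 / 2))) (Set.Ioi 0) := by
  have hi : ∀ u v : ℝ, IntervalIntegrable (fun x : ℝ => Real.exp (-x ^ 2 / 2)) volume u v :=
    fun u v => integrable_gauss.intervalIntegrable
  have hc : Continuous fun t : ℝ => ∫ x in (0 : ℝ)..t, Real.exp (-x ^ 2 / 2) :=
    intervalIntegral.continuous_primitive hi 0
  -- on `s > 0` the factors are differences of values of the continuous primitive
  have heq : ∀ s ∈ Set.Ioi (0 : ℝ),
      (∏ i, c * ∫ x in Set.Ioo (s * α i) (s * β i), Real.exp (-x ^ 2 / 2)) =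
      ∏ i, c * ((∫ x in (0 : ℝ)..(s * β i), Real.exp (-x ^ 2 / 2)) -
        ∫ x in (0 : ℝ)..(s * α i), Real.exp (-x ^ 2 / 2)) := by
    intro s hs
    refine Finset.prod_congr rfl fun i _ => ?_
    rw [setIntegral_Ioo_eq_interval (mul_le_mul_of_nonneg_left (h i) (le_of_lt hs)),
      intervalIntegral.integral_interval_sub_left (hi _ _) (hi _ _)]
  refine Integrable.bdd_mul (c := ∏ _i : Fin k, |c| * ∫ x : ℝ, Real.exp (-x ^ 2 / 2))
    (integrableOn_weight n) ?_ ?_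
  · have hcont : Continuous fun s : ℝ =>
        ∏ i, c * ((∫ x in (0 : ℝ)..(s * β i), Real.exp (-x ^ 2 / 2)) -
          ∫ x in (0 : ℝ)..(s * α i), Real.exp (-x ^ 2 / 2)) := by
      refine continuous_finsetProd _ fun i _ => continuous_const.mul
        ((hc.comp (continuous_mul_const _)).sub (hc.comp (continuous_mul_const _)))
    refine hcont.aestronglyMeasurable.congr ?_
    filter_upwards [ae_restrict_mem measurableSet_Ioi] with s hs using (heq s hs).symm
  · refine Filter.Eventually.of_forall fun s => ?_
    rw [Real.norm_eq_abs, Finset.abs_prod]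
    refine Finset.prod_le_prod (fun i _ => abs_nonneg _) fun i _ => ?_
    rw [abs_mul]
    refine mul_le_mul_of_nonneg_left ?_ (abs_nonneg _)
    rw [abs_of_nonneg (integral_nonneg fun x => (Real.exp_pos _).le)]
    exact setIntegral_le_integral integrable_gauss
      (Filter.Eventually.of_forall fun x => (Real.exp_pos _).le)

lemma half_sqrt_two_div_pi :
    (1 / 2 : ℝ) * Real.sqrt (2 / Real.pi) = 1 / Real.sqrt (2 * Real.pi) := by
  have h2 : Real.sqrt 2 * Real.sqrt 2 = 2 := Real.mul_self_sqrt (by norm_num)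
  have hp : Real.sqrt Real.pi ≠ 0 := (Real.sqrt_pos.2 Real.pi_pos).ne'
  have h2' : Real.sqrt 2 ≠ 0 := by positivity
  rw [Real.sqrt_div (by norm_num), Real.sqrt_mul (by norm_num)]
  field_simp
  linarith

/-- For `p ∈ [−1,1]^D`, the integral `I(p,Δ)` is bounded below by
`(1/2^m) · J_{m,n}(Δ/2)`, where `m = D − d_e`. -/
theorem stmt18 (D d_e : ℕ) (hD : d_e < D) (m : ℕ) (hm : m = D - d_e)
    (n : ℕ) (hn : 1 ≤ n) (Δ : ℝ) (hΔ : 0 < Δ)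
    (p : Fin D → ℝ) (hp : ∀ i, -1 ≤ p i ∧ p i ≤ 1) :
    (1 / 2 ^ m : ℝ) * Jmn m n (Δ / 2) ≤
      (1 / (2 ^ ((n : ℝ) / 2 - 1) * Real.Gamma ((n : ℝ) / 2))) *
        ∫ s in Set.Ioi (0 : ℝ),
          (∏ i : Fin (D - d_e),
            (1 / Real.sqrt (2 * Real.pi)) *
              ∫ x in Set.Ioo (s * (-1 - p ⟨d_e + (i : ℕ), by omega⟩) / Δ)
                  (s * (1 - p ⟨d_e + (i : ℕ), by omega⟩) / Δ),
                Real.exp (-x ^ 2 / 2)) *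
            (s ^ (n - 1) * Real.exp (-s ^ 2 / 2)) := by
  subst hm
  unfold Jmn
  rw [mul_left_comm]
  refine mul_le_mul_of_nonneg_left ?_
    (one_div_nonneg.2 (mul_nonneg (Real.rpow_nonneg (by norm_num) _)
      (Real.Gamma_nonneg_of_nonneg (by positivity))))
  rw [← integral_const_mul]
  refine integral_mono_of_nonneg ?_ ?_ ?_
  · filter_upwards [ae_restrict_mem measurableSet_Ioi] with s hs
    have hs' : (0 : ℝ) < s := hs
    have : 0 ≤ ∫ x in Set.Ioo 0 (s / (Δ / 2)), Real.exp (-x ^ 2 / 2) :=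
      integral_nonneg fun x => (Real.exp_pos _).le
    simp only [Pi.zero_apply]
    positivity
  · have := integrableOn_prod_gauss (1 / Real.sqrt (2 * Real.pi))
      (fun i : Fin (D - d_e) => (-1 - p ⟨d_e + (i : ℕ), by omega⟩) / Δ)
      (fun i : Fin (D - d_e) => (1 - p ⟨d_e + (i : ℕ), by omega⟩) / Δ)
      (fun i => div_le_div_of_nonneg_right (by linarith) hΔ.le) n
    simpa only [IntegrableOn, mul_div_assoc] using this
  · filter_upwards [ae_restrict_mem measurableSet_Ioi] with s hs
    have hs' : (0 : ℝ) < s := hs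
    rw [← mul_assoc]
    refine mul_le_mul_of_nonneg_right ?_ (by positivity)
    rw [← one_div_pow, ← mul_pow, ← mul_assoc, half_sqrt_two_div_pi]
    have hJ : 0 ≤ ∫ x in Set.Ioo 0 (s / (Δ / 2)), Real.exp (-x ^ 2 / 2) :=
      integral_nonneg fun x => (Real.exp_pos _).le
    rw [← Fin.prod_const]
    refine Finset.prod_le_prod (fun i _ => by positivity) fun i _ => ?_
    refine mul_le_mul_of_nonneg_left ?_ (by positivity)
    obtain ⟨h1, h2⟩ := hp ⟨d_e + (i : ℕ), by omega⟩
    generalize p ⟨d_e + (i : ℕ), by omega⟩ = q at h1 h2 ⊢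
    have ha : 0 ≤ s * (1 + q) / Δ :=
      div_nonneg (mul_nonneg hs'.le (by linarith)) hΔ.le
    have hb : 0 ≤ s * (1 - q) / Δ :=
      div_nonneg (mul_nonneg hs'.le (by linarith)) hΔ.le
    have key := gauss_interval_le ha hb
    have e1 : s * (1 + q) / Δ + s * (1 - q) / Δ = s / (Δ / 2) := by
      field_simp
      ring
    have e2 : -(s * (1 + q) / Δ) = s * (-1 - q) / Δ := by ring
    rw [e1, e2] at key
    rw [setIntegral_Ioo_eq_interval (by positivity),
      setIntegral_Ioo_eq_interval (by linarith)]
    exact key
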